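/- Let M be the 27 × 27 integer matrix obtained by stacking vertically the three Kronecker products r ⊗ I₃ ⊗ I₃, I₃ ⊗ r ⊗ I₃, and I₃ ⊗ I₃ ⊗ r, where I₃ is the 3 × 3 identity matrix and r = (1, 1, 1). Let x_p = (0,0,0,0,54,0,0,0,0,0,54,0,54,2754,0,0,54,54,0,0,0,0,54,54,1,0,0) ∈ ℤ²⁷. Then the set of vectors x ∈ ℤ²⁷ with all coordinates nonnegative satisfying M x = M x_p and x₂₇ = 0 has exactly 2 elements. -/

import Mathlib

/-!
View `x` as a 3 × 3 × 3 table; `M x` lists its 27 line sums. Let `x` be a solution, so that all line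
sums of `y = x - x_p` are zero. The lines `(1,1,*)`, `(1,3,*)` and `(3,1,*)` of `x_p` vanish, so by
nonnegativity those of `x` and hence of `y` do too, and the zero line sums spread these zeros,
together with `y₂₇ = 0`, to everything outside the box `{2,3} × {2,3} × {1,2}`. A table with zero
line sums supported in a 2 × 2 × 2 box is a multiple `t • d` of the move with alternating entries
`±1` at the corners of the box. Finally `x_p + t • d` has last line `(1 - t, t, 0)`, which leaves
`t = 0` and `t = 1`.
-/

open Matrix Kronecker

/-- The 1 × 3 all-ones row vector `r = (1, 1, 1)`. -/
def rOnes : Matrix (Fin 1) (Fin 3) ℤ := Matrix.of fun _ _ => 1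

/-- Lexicographic identification of index triples `(i₁, i₂, i₃)` with `Fin 27`
(first coordinate most significant), matching the lexicographic ordering of the triples
`(i₁, i₂, i₃) ∈ {1, 2, 3}³` used to index the 27 coordinates. -/
def colEquiv : (Fin 3 × Fin 3) × Fin 3 ≃ Fin 27 :=
  (Equiv.prodCongr finProdFinEquiv (Equiv.refl (Fin 3))).trans finProdFinEquiv

def rowEquiv1 : (Fin 1 × Fin 3) × Fin 3 ≃ Fin 9 :=
  (Equiv.prodCongr finProdFinEquiv (Equiv.refl (Fin 3))).trans finProdFinEquiv

def rowEquiv2 : (Fin 3 × Fin 1) × Fin 3 ≃ Fin 9 :=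
  (Equiv.prodCongr finProdFinEquiv (Equiv.refl (Fin 3))).trans finProdFinEquiv

def rowEquiv3 : (Fin 3 × Fin 3) × Fin 1 ≃ Fin 9 :=
  (Equiv.prodCongr finProdFinEquiv (Equiv.refl (Fin 1))).trans finProdFinEquiv

/-- The 27 × 27 matrix obtained by stacking vertically the three Kronecker products
`r ⊗ I₃ ⊗ I₃`, `I₃ ⊗ r ⊗ I₃` and `I₃ ⊗ I₃ ⊗ r`, where `I₃` is the 3 × 3 identity matrix and
`r = (1, 1, 1)` is the 1 × 3 all-ones row, with columns indexed lexicographically by triples. -/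
def M : Matrix (Fin 27) (Fin 27) ℤ :=
  Matrix.reindex
    ((rowEquiv1.sumCongr (rowEquiv2.sumCongr rowEquiv3)).trans
      (((Equiv.refl (Fin 9)).sumCongr finSumFinEquiv).trans finSumFinEquiv))
    colEquiv
    (Matrix.fromRows
      (rOnes ⊗ₖ (1 : Matrix (Fin 3) (Fin 3) ℤ) ⊗ₖ (1 : Matrix (Fin 3) (Fin 3) ℤ))
      (Matrix.fromRows
        ((1 : Matrix (Fin 3) (Fin 3) ℤ) ⊗ₖ rOnes ⊗ₖ (1 : Matrix (Fin 3) (Fin 3) ℤ))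
        ((1 : Matrix (Fin 3) (Fin 3) ℤ) ⊗ₖ (1 : Matrix (Fin 3) (Fin 3) ℤ) ⊗ₖ rOnes)))

/-- The particular solution of block 331 (coordinates indexed lexicographically by triples,
coordinate 27 corresponding to (3,3,3)). -/
def xp : Fin 27 → ℤ := ![0,0,0,0,54,0,0,0,0,0,54,0,54,2754,0,0,54,54,0,0,0,0,54,54,1,0,0]

section KroneckerOne

variable {l m n R : Type*} [Fintype m] [Fintype n] [NonAssocSemiring R]

lemma kronecker_one_mulVec_apply [DecidableEq n] (A : Matrix l m R) (v : m × n → R) (i : l)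
    (j : n) : ((A ⊗ₖ (1 : Matrix n n R)) *ᵥ v) (i, j) = (A *ᵥ fun i' => v (i', j)) i := by
  simp [mulVec, dotProduct, Fintype.sum_prod_type, kroneckerMap_apply, one_apply]

lemma one_kronecker_mulVec_apply [DecidableEq m] (A : Matrix l n R) (v : m × n → R) (i : m)
    (j : l) : (((1 : Matrix m m R) ⊗ₖ A) *ᵥ v) (i, j) = (A *ᵥ fun j' => v (i, j')) j := by
  simp [mulVec, dotProduct, Fintype.sum_prod_type, kroneckerMap_apply, one_apply]

end KroneckerOne

/-- The difference `e_c - e_b` of two standard basis vectors: the one-dimensional factor from which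
tables with zero line sums are built. -/
def basisDiff {ι : Type*} [DecidableEq ι] (R : Type*) [Ring R] (b c : ι) : ι → R :=
  Pi.single c 1 - Pi.single b 1

section ZeroSum

variable {ι : Type*} [Fintype ι]

lemma apply_eq_zero_of_sum_eq_zero {A : Type*} [AddCommMonoid A] {f : ι → A}
    (hf : ∑ i, f i = 0) (b : ι) (hb : ∀ i, i ≠ b → f i = 0) : f b = 0 := by
  rwa [Fintype.sum_eq_single b hb] at hf

lemma eq_zero_of_sum_sub_eq_zero {A : Type*} [AddCommGroup A] [PartialOrder A]
    [IsOrderedAddMonoid A] {f g : ι → A} (hfg : ∑ i, (f i - g i) = 0) (hf : ∀ i, 0 ≤ f i)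
    (hg : ∀ i, g i = 0) (i : ι) : f i = 0 := by
  have hsum : ∑ i, f i = 0 := by simpa [hg] using hfg
  exact (Finset.sum_eq_zero_iff_of_nonneg fun i _ => hf i).mp hsum i (Finset.mem_univ i)

variable [DecidableEq ι] {R : Type*} [Ring R]

@[simp]
lemma sum_basisDiff (b c : ι) : ∑ i, basisDiff R b c i = 0 := by
  simp [basisDiff]

lemma eq_basisDiff_mul_of_sum_eq_zero {b c : ι} (hbc : b ≠ c) {v : ι → R} (hv : ∑ i, v i = 0)
    (hsupp : ∀ i, i ≠ b ∧ i ≠ c → v i = 0) (i : ι) : v i = basisDiff R b c i * v c := by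
  have hb : v b = -v c := by
    rwa [Fintype.sum_eq_add b c hbc hsupp, add_eq_zero_iff_eq_neg] at hv
  obtain rfl | hib := eq_or_ne i b
  · simp [basisDiff, hbc, hb]
  obtain rfl | hic := eq_or_ne i c
  · simp [basisDiff, hib]
  · simp [basisDiff, hib, hic, hsupp i ⟨hib, hic⟩]

end ZeroSum

/-- The elementary move on the box `{b, c} × {d, e} × {f, g}`: for `b ≠ c`, `d ≠ e` and `f ≠ g`, the
three-way table with entry `1` at `(c, e, g)`, alternating `±1` at the other corners of the box, and
`0` elsewhere. -/
def boxMove {ι κ μ : Type*} [DecidableEq ι] [DecidableEq κ] [DecidableEq μ] (R : Type*) [Ring R]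
    (b c : ι) (d e : κ) (f g : μ) (i : ι) (j : κ) (k : μ) : R :=
  basisDiff R b c i * (basisDiff R d e j * basisDiff R f g k)

section Tables

variable {ι κ μ R : Type*} [Fintype ι] [Fintype κ] [Fintype μ]

/-- The sums of the three-way table `y` along all axis-parallel lines are zero. -/
structure HasZeroLineSums [AddCommMonoid R] (y : ι → κ → μ → R) : Prop where
  sum_fst : ∀ j k, ∑ i, y i j k = 0
  sum_snd : ∀ i k, ∑ j, y i j k = 0
  sum_thd : ∀ i j, ∑ k, y i j k = 0

variable [DecidableEq ι] [DecidableEq κ] [DecidableEq μ] [Ring R]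

lemma hasZeroLineSums_boxMove (b c : ι) (d e : κ) (f g : μ) :
    HasZeroLineSums (boxMove R b c d e f g) where
  sum_fst j k := by simp [boxMove, ← Finset.sum_mul]
  sum_snd i k := by simp [boxMove, ← Finset.mul_sum, ← Finset.sum_mul]
  sum_thd i j := by simp [boxMove, ← Finset.mul_sum]

lemma HasZeroLineSums.eq_boxMove_mul {y : ι → κ → μ → R} (hy : HasZeroLineSums y)
    {b c : ι} {d e : κ} {f g : μ} (hbc : b ≠ c) (hde : d ≠ e) (hfg : f ≠ g)
    (h₁ : ∀ i, i ≠ b ∧ i ≠ c → ∀ j k, y i j k = 0)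
    (h₂ : ∀ j, j ≠ d ∧ j ≠ e → ∀ i k, y i j k = 0)
    (h₃ : ∀ k, k ≠ f ∧ k ≠ g → ∀ i j, y i j k = 0) (i : ι) (j : κ) (k : μ) :
    y i j k = boxMove R b c d e f g i j k * y c e g :=
  calc
    y i j k = basisDiff R b c i * y c j k :=
      eq_basisDiff_mul_of_sum_eq_zero hbc (hy.sum_fst j k) (fun i hi => h₁ i hi j k) i
    _ = basisDiff R b c i * (basisDiff R d e j * y c e k) := by
      rw [eq_basisDiff_mul_of_sum_eq_zero hde (hy.sum_snd c k) (fun j hj => h₂ j hj c k) j]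
    _ = basisDiff R b c i * (basisDiff R d e j * (basisDiff R f g k * y c e g)) := by
      rw [eq_basisDiff_mul_of_sum_eq_zero hfg (hy.sum_thd c e) (fun k hk => h₃ k hk c e) k]
    _ = boxMove R b c d e f g i j k * y c e g := by
      simp only [boxMove, mul_assoc]

end Tables

lemma HasZeroLineSums.eq_boxMove_mul_of_lines_eq_zero {R : Type*} [Ring R]
    {y : Fin 3 → Fin 3 → Fin 3 → R} (hy : HasZeroLineSums y) (h₀₀ : ∀ k, y 0 0 k = 0)
    (h₀₂ : ∀ k, y 0 2 k = 0) (h₂₀ : ∀ k, y 2 0 k = 0) (h₂₂₂ : y 2 2 2 = 0) (i j k : Fin 3) :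
    y i j k = boxMove R 1 2 1 2 0 1 i j k * y 2 2 1 := by
  have h₀₁ (k) : y 0 1 k = 0 :=
    apply_eq_zero_of_sum_eq_zero (hy.sum_snd 0 k) 1 (by simp [Fin.forall_fin_succ, h₀₀, h₀₂])
  have h₁₀ (k) : y 1 0 k = 0 :=
    apply_eq_zero_of_sum_eq_zero (hy.sum_fst 0 k) 1 (by simp [Fin.forall_fin_succ, h₀₀, h₂₀])
  have h₁₂₂ : y 1 2 2 = 0 :=
    apply_eq_zero_of_sum_eq_zero (hy.sum_fst 2 2) 1 (by simp [Fin.forall_fin_succ, h₀₂, h₂₂₂])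
  have h₂₁₂ : y 2 1 2 = 0 :=
    apply_eq_zero_of_sum_eq_zero (hy.sum_snd 2 2) 1 (by simp [Fin.forall_fin_succ, h₂₀, h₂₂₂])
  have h₁₁₂ : y 1 1 2 = 0 :=
    apply_eq_zero_of_sum_eq_zero (hy.sum_snd 1 2) 1 (by simp [Fin.forall_fin_succ, h₁₀, h₁₂₂])
  apply hy.eq_boxMove_mul <;> simp [Fin.forall_fin_succ, *]

/-- The 3 × 3 × 3 table with entries `x`, where the paper's triple `(i₁, i₂, i₃)` becomes
`(i₁ - 1, i₂ - 1, i₃ - 1)`. -/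
def toTable (x : Fin 27 → ℤ) (i j k : Fin 3) : ℤ := x (colEquiv ((i, j), k))

lemma rOnes_mulVec_apply (v : Fin 3 → ℤ) (a : Fin 1) : (rOnes *ᵥ v) a = ∑ i, v i := by
  simp [rOnes, mulVec, dotProduct]

lemma M_mulVec_eq_zero_iff (y : Fin 27 → ℤ) : M *ᵥ y = 0 ↔ HasZeroLineSums (toTable y) := by
  rw [M, reindex_apply, submatrix_mulVec_equiv, Equiv.symm_symm, Equiv.comp_symm_eq]
  simp only [fromRows_mulVec, one_kronecker_one, funext_iff, Sum.forall, Prod.forall,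
    Sum.elim_inl, Sum.elim_inr, kronecker_one_mulVec_apply, one_kronecker_mulVec_apply,
    rOnes_mulVec_apply, Function.comp_apply, Pi.zero_apply, forall_const]
  exact ⟨fun ⟨h₁, h₂, h₃⟩ => ⟨h₁, h₂, h₃⟩, fun ⟨h₁, h₂, h₃⟩ => ⟨h₁, h₂, h₃⟩⟩

/-- The vector whose table is the elementary move on the box `{2, 3} × {2, 3} × {1, 2}`, in the
1-based indexing of the paper. -/
def block331Move : Fin 27 → ℤ := fun n =>
  boxMove ℤ 1 2 1 2 0 1 (colEquiv.symm n).1.1 (colEquiv.symm n).1.2 (colEquiv.symm n).2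

lemma toTable_block331Move : toTable block331Move = boxMove ℤ 1 2 1 2 0 1 := by
  ext i j k
  simp [toTable, block331Move]

lemma M_mulVec_block331Move : M *ᵥ block331Move = 0 := by
  rw [M_mulVec_eq_zero_iff, toTable_block331Move]
  exact hasZeroLineSums_boxMove ..

lemma eq_xp_add_smul_block331Move {x : Fin 27 → ℤ} (hx : ∀ n, 0 ≤ x n)
    (hM : M *ᵥ x = M *ᵥ xp) (hlast : x 26 = 0) : x = xp + x 25 • block331Move := by
  have hy : HasZeroLineSums (toTable (x - xp)) := by
    rw [← M_mulVec_eq_zero_iff, mulVec_sub, hM, sub_self]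
  have hline (i j : Fin 3) (hxp : ∀ k, toTable xp i j k = 0) (k : Fin 3) :
      toTable (x - xp) i j k = 0 := by
    have hxk : toTable x i j k = 0 :=
      eq_zero_of_sum_sub_eq_zero (hy.sum_thd i j) (fun k => hx _) hxp k
    exact sub_eq_zero.mpr (hxk.trans (hxp k).symm)
  have hmul := hy.eq_boxMove_mul_of_lines_eq_zero (hline 0 0 (by decide)) (hline 0 2 (by decide))
    (hline 2 0 (by decide)) (sub_eq_zero.mpr hlast)
  ext n
  obtain ⟨⟨⟨i, j⟩, k⟩, rfl⟩ := colEquiv.surjective n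
  have h25 : toTable (x - xp) 2 2 1 = x 25 := sub_zero (x 25)
  have hn := hmul i j k
  rw [h25, mul_comm, ← toTable_block331Move] at hn
  exact eq_add_of_sub_eq' hn

lemma block331_solutionSet_eq_image :
    {x : Fin 27 → ℤ | (∀ i, 0 ≤ x i) ∧ M *ᵥ x = M *ᵥ xp ∧ x 26 = 0} =
      (fun t : ℤ => xp + t • block331Move) '' Set.Icc 0 1 := by
  ext x
  constructor
  · rintro ⟨hx, hM, hlast⟩
    have hxt := eq_xp_add_smul_block331Move hx hM hlast
    have h24 : x 24 = 1 - x 25 := by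
      have hd : block331Move 24 = -1 := by decide
      have hxp : xp 24 = 1 := by decide
      simpa [hd, hxp, sub_eq_add_neg] using congrFun hxt 24
    exact ⟨x 25, ⟨hx 25, by linarith [hx 24]⟩, hxt.symm⟩
  · rintro ⟨t, ⟨ht₀, ht₁⟩, rfl⟩
    refine ⟨?_, ?_, ?_⟩
    · interval_cases t <;> decide +kernel
    · rw [mulVec_add, mulVec_smul, M_mulVec_block331Move, smul_zero, add_zero]
    · have hd : block331Move 26 = 0 := by decide
      have hxp : xp 26 = 0 := by decide
      simp [hd, hxp]

lemma injective_xp_add_smul_block331Move :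
    Function.Injective fun t : ℤ => xp + t • block331Move := by
  have hd : block331Move ≠ 0 := fun h => absurd (congrFun h 25) (by decide)
  exact (add_right_injective xp).comp (smul_left_injective ℤ hd)

/-- The set of nonnegative integer vectors \`x\` with \`M x = M x_p\` and \`x₂₇ = 0\` (block 331) has exactly 2 elements. -/
theorem block331_solution_count :
    {x : Fin 27 → ℤ | (∀ i, 0 ≤ x i) ∧ M.mulVec x = M.mulVec xp ∧ x 26 = 0}.ncard = 2 := by
  rw [block331_solutionSet_eq_image,
    Set.ncard_image_of_injective _ injective_xp_add_smul_block331Move]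
  simp [Set.ncard_eq_toFinset_card']
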